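/- Let ρ_AB be a separable density matrix on ℂ^m ⊗ ℂ^n. For t ∈ {1,2,3} and b ∈ {0,1}, let E_{t,b} be positive semidefinite n×n matrices such that (E_{t,0} + E_{t,1})/2 equals one fixed matrix E_* for all t, and let M_{t,b} be positive semidefinite m×m matrices such that M_{t,0} + M_{t,1} = I_A for each t and (1/3) ∑_{t=1}^3 M_{t,b} = I_A/2 for each b. Then ∑_{t=1}^3 ∑_{b=0}^1 Tr[(M_{t,b} ⊗ E_{t,b}) ρ_AB] ≤ 5 Tr[(I_A ⊗ E_*) ρ_AB]. -/

import Mathlib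

open Matrix
open scoped Kronecker ComplexOrder BigOperators

noncomputable section

/-- A density matrix: positive semidefinite with trace 1. -/
def IsDensity {d : Type*} [Fintype d] [DecidableEq d] (ρ : Matrix d d ℂ) : Prop :=
  ρ.PosSemidef ∧ ρ.trace = 1

/-- Partial trace over the second (B) factor. -/
def trB {m n : ℕ} (ρ : Matrix (Fin m × Fin n) (Fin m × Fin n) ℂ) :
    Matrix (Fin m) (Fin m) ℂ := fun i j => ∑ k, ρ (i, k) (j, k)

/-- Partial trace over the first (A) factor. -/
def trA {m n : ℕ} (ρ : Matrix (Fin m × Fin n) (Fin m × Fin n) ℂ) :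
    Matrix (Fin n) (Fin n) ℂ := fun k l => ∑ i, ρ (i, k) (i, l)

/-- The set of states remotely preparable on Alice's side. -/
def LambdaA {m n : ℕ} (ρ : Matrix (Fin m × Fin n) (Fin m × Fin n) ℂ) :
    Set (Matrix (Fin m) (Fin m) ℂ) :=
  {σ | IsDensity σ ∧ ∃ E : Matrix (Fin n) (Fin n) ℂ, E.PosSemidef ∧
    σ = trB (((1 : Matrix (Fin m) (Fin m) ℂ) ⊗ₖ E) * ρ)}

/-- The set of states remotely preparable on Bob's side. -/
def LambdaB {m n : ℕ} (ρ : Matrix (Fin m × Fin n) (Fin m × Fin n) ℂ) :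
    Set (Matrix (Fin n) (Fin n) ℂ) :=
  {σ | IsDensity σ ∧ ∃ E : Matrix (Fin m) (Fin m) ℂ, E.PosSemidef ∧
    σ = trA ((E ⊗ₖ (1 : Matrix (Fin n) (Fin n) ℂ)) * ρ)}

/-- A preparation-and-measurement noncontextual model for a set `K` of density matrices. -/
def HasNCModel {d : ℕ} (K : Set (Matrix (Fin d) (Fin d) ℂ)) : Prop :=
  ∃ (L : ℕ) (N ω : Fin L → Matrix (Fin d) (Fin d) ℂ),
    (∀ l, (N l).IsHermitian) ∧ (∀ l, IsDensity (ω l)) ∧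
    (∀ ρ ∈ K, ∀ l, 0 ≤ (ρ * N l).trace) ∧
    (∀ ρ ∈ K, ∑ l, (ρ * N l).trace = 1) ∧
    (∀ ρ ∈ K, ∀ M : Matrix (Fin d) (Fin d) ℂ, M.PosSemidef → (1 - M).PosSemidef →
      (ρ * M).trace = ∑ l, (ρ * N l).trace * (ω l * M).trace)

/-- Separability of a bipartite density matrix. -/
def Separable {m n : ℕ} (ρ : Matrix (Fin m × Fin n) (Fin m × Fin n) ℂ) : Prop :=
  ∃ (L : ℕ) (ω : Fin L → Matrix (Fin m) (Fin m) ℂ)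
    (κ : Fin L → Matrix (Fin n) (Fin n) ℂ),
    (∀ l, IsDensity (ω l)) ∧ (∀ l, (κ l).PosSemidef) ∧ ρ = ∑ l, ω l ⊗ₖ κ l

/-!
Both sides are linear in `ρ`, so `ρ` may be taken to be a product `ω ⊗ κ` with `tr ω = 1`. The
left-hand side is then `∑ t b, p t b * q t b`, where `p t b = tr (M t b * ω)` and
`q t b = tr (E t b * κ)`.
For each of the `T` trials `t`, the weight `∑ b, q t b` does not depend on `t`, and moving all of it
to an outcome `f t` at which `p t` is largest can only increase the sum; it remains to bound
`∑ t, p t (f t)`. By pigeonhole some `b` among the `k` outcomes equals `f t` in at least `⌈T / k⌉`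
trials. In those trials `p t (f t) = p t b`, and `∑ t, p t b` over all trials is `T / k` by
hypothesis; in the other trials `p t (f t) ≤ 1`. So the sum is at most `T / k + (T - ⌈T / k⌉)`, and
`T = 3`, `k = 2` gives `5 / 2`.
-/

/-- The largest possible number of votes not cast for the winner, when each of `T` voters chooses
one of `k` candidates. The subtraction does not truncate, since `⌈T / k⌉ ≤ T`. -/
def maxMinority (T k : ℕ) : ℕ := T - T ⌈/⌉ k

theorem maxMinority_three_two : maxMinority 3 2 = 1 := rfl

section Scalar

open Finset Fintype

variable {τ β R 𝕜 : Type*}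

theorem exists_card_ne_le_maxMinority [Fintype τ] [Fintype β] [DecidableEq β] [Nonempty β]
    (f : τ → β) : ∃ b, #{t | f t ≠ b} ≤ maxMinority (card τ) (card β) := by
  classical
  obtain ⟨b, -, hb⟩ := exists_max_image univ (fun b => #{t | f t = b}) univ_nonempty
  have card_le : card τ ≤ card β • #{t | f t = b} := calc
    card τ = ∑ b', #{t | f t = b'} := card_eq_sum_card_fiberwise fun t _ => mem_univ (f t)
    _ ≤ card β • #{t | f t = b} := sum_le_card_nsmul _ _ _ hb
  refine ⟨b, ?_⟩
  rw [filter_not, ← compl_eq_univ_sdiff, card_compl, maxMinority]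
  exact Nat.sub_le_sub_left ((ceilDiv_le_iff_le_smul card_pos).2 card_le) _

theorem exists_forall_le_of_nonneg [RCLike 𝕜] [Finite β] [Nonempty β] {p : β → 𝕜}
    (hp : ∀ b, 0 ≤ p b) : ∃ b₀, ∀ b, p b ≤ p b₀ := by
  obtain ⟨b₀, hb₀⟩ := Finite.exists_max fun b => RCLike.re (p b)
  refine ⟨b₀, fun b => RCLike.le_iff_re_im.2 ⟨hb₀ b, ?_⟩⟩
  rw [(RCLike.nonneg_iff.1 (hp b)).2, (RCLike.nonneg_iff.1 (hp b₀)).2]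

variable [Fintype τ] [Fintype β] [Nonempty τ] [Nonempty β]

theorem sum_apply_le_add_maxMinority_nsmul [AddCommMonoid R] [PartialOrder R]
    [IsOrderedAddMonoid R] {p : τ → β → R} {v w : R} (hp : ∀ t b, 0 ≤ p t b)
    (hpw : ∀ t b, p t b ≤ w) (hp_trials : ∀ b, ∑ t, p t b = v) (f : τ → β) :
    ∑ t, p t (f t) ≤ v + maxMinority (card τ) (card β) • w := by
  classical
  obtain ⟨b, hb⟩ := exists_card_ne_le_maxMinority f
  have hw : 0 ≤ w := (hp (Classical.arbitrary τ) b).trans (hpw _ _)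
  have apply_le (t : τ) : p t (f t) ≤ p t b + if f t ≠ b then w else 0 := by
    split_ifs with h
    · exact (hpw t (f t)).trans (le_add_of_nonneg_left (hp t b))
    · rw [not_not.1 h, add_zero]
  calc
    ∑ t, p t (f t) ≤ ∑ t, (p t b + if f t ≠ b then w else 0) := sum_le_sum fun t _ => apply_le t
    _ = v + #{t | f t ≠ b} • w := by
      rw [sum_add_distrib, hp_trials, ← sum_filter, sum_const]
    _ ≤ v + maxMinority (card τ) (card β) • w := by gcongr

theorem sum_sum_mul_le_of_nonneg [RCLike 𝕜] {p q : τ → β → 𝕜} {s v w : 𝕜}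
    (hp : ∀ t b, 0 ≤ p t b) (hq : ∀ t b, 0 ≤ q t b) (hp_outcomes : ∀ t, ∑ b, p t b = w)
    (hp_trials : ∀ b, ∑ t, p t b = v) (hq_outcomes : ∀ t, ∑ b, q t b = s) :
    ∑ t, ∑ b, p t b * q t b ≤ (v + maxMinority (card τ) (card β) • w) * s := by
  choose f hf using fun t => exists_forall_le_of_nonneg (hp t)
  have hpw (t : τ) (b : β) : p t b ≤ w :=
    hp_outcomes t ▸ single_le_sum (fun b _ => hp t b) (mem_univ b)
  have hs : 0 ≤ s := hq_outcomes (Classical.arbitrary τ) ▸ sum_nonneg fun b _ => hq _ b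
  calc
    ∑ t, ∑ b, p t b * q t b ≤ ∑ t, ∑ b, p t (f t) * q t b := by
      gcongr with t _ b _
      · exact hq t b
      · exact hf t b
    _ = (∑ t, p t (f t)) * s := by simp only [← mul_sum, hq_outcomes, sum_mul]
    _ ≤ (v + maxMinority (card τ) (card β) • w) * s := by
      gcongr
      exact sum_apply_le_add_maxMinority_nsmul hp hpw hp_trials f

end Scalar

section Witness

open Fintype

variable {𝕜 : Type*} [RCLike 𝕜] {ι a b τ β : Type*} [Fintype a] [Fintype b]

theorem trace_mul_nonneg_of_posSemidef {A B : Matrix a a 𝕜} (hA : A.PosSemidef)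
    (hB : B.PosSemidef) : 0 ≤ (A * B).trace := by
  obtain ⟨r, x, rfl⟩ := posSemidef_iff_eq_sum_vecMulVec.1 hA
  rw [Matrix.sum_mul, trace_sum]
  refine Finset.sum_nonneg fun i _ => ?_
  rw [trace_mul_comm, mul_vecMulVec, trace_vecMulVec, dotProduct_comm]
  exact hB.dotProduct_mulVec_nonneg (x i)

theorem trace_kronecker_mul_kronecker (A ω : Matrix a a 𝕜) (B κ : Matrix b b 𝕜) :
    ((A ⊗ₖ B) * (ω ⊗ₖ κ)).trace = (A * ω).trace * (B * κ).trace := by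
  rw [← mul_kronecker_mul, trace_kronecker]

theorem sum_trace_mul_eq_of_smul_sum_eq [Fintype ι] {X : ι → Matrix a a 𝕜} {B : Matrix a a 𝕜}
    {c : 𝕜} (hc : c ≠ 0) (hX : (1 / c) • ∑ i, X i = B) (A : Matrix a a 𝕜) :
    ∑ i, (X i * A).trace = c * (B * A).trace := by
  rw [← trace_sum, ← Matrix.sum_mul, ← hX, Matrix.smul_mul, trace_smul, smul_eq_mul,
    ← mul_assoc, mul_one_div_cancel hc, one_mul]

variable (𝕜 a b) in
/-- The cone of unnormalised separable operators on a bipartite system: finite sums of products of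
positive semidefinite operators on the two factors. -/
def separableCone : AddSubmonoid (Matrix (a × b) (a × b) 𝕜) :=
  .closure (Set.image2 (· ⊗ₖ ·) {ω | ω.PosSemidef} {κ | κ.PosSemidef})

theorem mem_separableCone_of_separable {m n : ℕ}
    {ρ : Matrix (Fin m × Fin n) (Fin m × Fin n) ℂ} (hρ : Separable ρ) :
    ρ ∈ separableCone ℂ (Fin m) (Fin n) := by
  obtain ⟨L, ω, κ, hω, hκ, rfl⟩ := hρ
  exact sum_mem fun l _ => AddSubmonoid.subset_closure ⟨ω l, (hω l).1, κ l, hκ l, rfl⟩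

variable [DecidableEq a] [Fintype τ] [Fintype β] [Nonempty τ] [Nonempty β]
  {E : τ → β → Matrix b b 𝕜} {Es : Matrix b b 𝕜} {M : τ → β → Matrix a a 𝕜}

theorem sum_trace_kronecker_mul_kronecker_le {ω : Matrix a a 𝕜} {κ : Matrix b b 𝕜}
    (hω : ω.PosSemidef) (hκ : κ.PosSemidef) (hE : ∀ t y, (E t y).PosSemidef)
    (hEmix : ∀ t, (1 / card β : 𝕜) • ∑ y, E t y = Es) (hM : ∀ t y, (M t y).PosSemidef)
    (hMsum : ∀ t, ∑ y, M t y = 1)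
    (hMavg : ∀ y, (1 / card τ : 𝕜) • ∑ t, M t y = (1 / card β : 𝕜) • (1 : Matrix a a 𝕜)) :
    ∑ t, ∑ y, ((M t y ⊗ₖ E t y) * (ω ⊗ₖ κ)).trace ≤
      ((card τ + card β * maxMinority (card τ) (card β) : ℕ) : 𝕜) *
        (((1 : Matrix a a 𝕜) ⊗ₖ Es) * (ω ⊗ₖ κ)).trace := by
  have hτ : (card τ : 𝕜) ≠ 0 := by simp
  have hβ : (card β : 𝕜) ≠ 0 := by simp
  have sum_M_outcomes (t : τ) : ∑ y, (M t y * ω).trace = ω.trace := by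
    rw [← trace_sum, ← Matrix.sum_mul, hMsum, Matrix.one_mul]
  have sum_M_trials (y : β) := sum_trace_mul_eq_of_smul_sum_eq hτ (hMavg y) ω
  have sum_E_outcomes (t : τ) := sum_trace_mul_eq_of_smul_sum_eq hβ (hEmix t) κ
  simp only [trace_kronecker_mul_kronecker, Matrix.one_mul]
  refine (sum_sum_mul_le_of_nonneg (fun t y => trace_mul_nonneg_of_posSemidef (hM t y) hω)
    (fun t y => trace_mul_nonneg_of_posSemidef (hE t y) hκ)
    sum_M_outcomes sum_M_trials sum_E_outcomes).trans_eq ?_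
  simp only [Matrix.smul_mul, Matrix.one_mul, trace_smul, smul_eq_mul, nsmul_eq_mul]
  push_cast
  field_simp

theorem entanglement_witness_from_noncontextuality_inequality_general
    {ρ : Matrix (a × b) (a × b) 𝕜} (hρ : ρ ∈ separableCone 𝕜 a b)
    (hE : ∀ t y, (E t y).PosSemidef) (hEmix : ∀ t, (1 / card β : 𝕜) • ∑ y, E t y = Es)
    (hM : ∀ t y, (M t y).PosSemidef) (hMsum : ∀ t, ∑ y, M t y = 1)
    (hMavg : ∀ y, (1 / card τ : 𝕜) • ∑ t, M t y = (1 / card β : 𝕜) • (1 : Matrix a a 𝕜)) :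
    ∑ t, ∑ y, ((M t y ⊗ₖ E t y) * ρ).trace ≤
      ((card τ + card β * maxMinority (card τ) (card β) : ℕ) : 𝕜) *
        (((1 : Matrix a a 𝕜) ⊗ₖ Es) * ρ).trace := by
  induction hρ using AddSubmonoid.closure_induction with
  | mem _ hprod =>
    obtain ⟨ω, hω, κ, hκ, rfl⟩ := hprod
    exact sum_trace_kronecker_mul_kronecker_le hω hκ hE hEmix hM hMsum hMavg
  | zero => simp
  | add _ _ _ _ hle₁ hle₂ =>
    simp only [trace_add, Finset.sum_add_distrib, mul_add]
    exact add_le_add hle₁ hle₂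

end Witness

theorem entanglement_witness_from_noncontextuality_inequality {m n : ℕ}
    (ρ : Matrix (Fin m × Fin n) (Fin m × Fin n) ℂ)
    (hρ : IsDensity ρ) (hsep : Separable ρ)
    (E : Fin 3 → Fin 2 → Matrix (Fin n) (Fin n) ℂ)
    (Es : Matrix (Fin n) (Fin n) ℂ)
    (hE : ∀ t b, (E t b).PosSemidef)
    (hEmix : ∀ t, (1 / 2 : ℂ) • (E t 0 + E t 1) = Es)
    (M : Fin 3 → Fin 2 → Matrix (Fin m) (Fin m) ℂ)
    (hM : ∀ t b, (M t b).PosSemidef)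
    (hMsum : ∀ t, M t 0 + M t 1 = 1)
    (hMavg : ∀ b, (1 / 3 : ℂ) • ∑ t, M t b = (1 / 2 : ℂ) • (1 : Matrix (Fin m) (Fin m) ℂ)) :
    ∑ t, ∑ b, (((M t b) ⊗ₖ (E t b)) * ρ).trace ≤
      5 * ((((1 : Matrix (Fin m) (Fin m) ℂ) ⊗ₖ Es)) * ρ).trace := by
  simpa [maxMinority_three_two, show (3 + 2 : ℂ) = 5 by norm_num] using
    entanglement_witness_from_noncontextuality_inequality_general
      (mem_separableCone_of_separable hsep) hE (by simpa using hEmix) hM (by simpa using hMsum)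
      (by simpa using hMavg)
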